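/- For every graph G with at least one vertex, ξ(G*) = ξ(G)/(1 − ξ(G)); in particular, ξ(G*) ≥ −1/2. -/

import Mathlib

/-!
An independent set of `G*` is an independent set `s` of `G` together with a set of pendant vertices
avoiding the copy of `s`, so `I(G*, x) = ∑ₛ x^|s| (1 + x)^(n - |s|) = (1 + x)^n I(G, x / (1 + x))`.
The increasing bijection `x ↦ x / (1 + x)` from `(-1, ∞)` onto `(-∞, 1)`, with inverse
`y ↦ y / (1 - y)`, therefore matches the largest roots.

That `I(G, ·)` has a root in `[-1, 0)` is seen by applying the intermediate value theorem on
`[-1, 0]` to the minimum of the polynomials `I(G[S], ·)` over all vertex subsets `S`: at a zero `x`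
of the minimum every `I(G[S], x)` is nonnegative, hence, by the recurrence
`I(G, x) = I(G - v, x) + x I(G - N[v], x)`, antitone in `S`; since some `I(G[S], x)` vanishes,
so does `I(G, x)`.
-/

open Polynomial SimpleGraph

/-- A finset of vertices is independent: pairwise nonadjacent. -/
def IsIndepFinset {V : Type*} (G : SimpleGraph V) (s : Finset V) : Prop :=
  ∀ u ∈ s, ∀ v ∈ s, ¬ G.Adj u v

open Classical in
/-- The independence polynomial of a finite graph, with real coefficients. -/
noncomputable def indepPoly {V : Type*} [Fintype V] (G : SimpleGraph V) : Polynomial ℝ :=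
  ∑ s : Finset V, if IsIndepFinset G s then (X : Polynomial ℝ) ^ s.card else 0

/-- `xi G` : the largest real root of the independence polynomial of `G`. -/
noncomputable def xi {V : Type*} [Fintype V] (G : SimpleGraph V) : ℝ :=
  sSup {x : ℝ | (indepPoly G).eval x = 0}

/-- `Pre H G` (`H ⪯ G`) : `I(H,x) ≥ I(G,x)` for all `x ∈ [ξ(G), 0]`. -/
def Pre {V W : Type*} [Fintype V] [Fintype W] (H : SimpleGraph W) (G : SimpleGraph V) : Prop :=
  ∀ x ∈ Set.Icc (xi G) 0, (indepPoly G).eval x ≤ (indepPoly H).eval x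

/-- `SPre H G` (`H ≺ G`). -/
def SPre {V W : Type*} [Fintype V] [Fintype W] (H : SimpleGraph W) (G : SimpleGraph V) : Prop :=
  Pre H G ∧ indepPoly H ≠ indepPoly G

open Classical in
/-- A graph is well-covered if all maximal independent sets have the same size. -/
def WellCovered {V : Type*} (G : SimpleGraph V) : Prop :=
  ∀ s t : Finset V,
    IsIndepFinset G s → (∀ v ∉ s, ¬ IsIndepFinset G (insert v s)) →
    IsIndepFinset G t → (∀ v ∉ t, ¬ IsIndepFinset G (insert v t)) →
    s.card = t.card

/-- A connected unicyclic graph: connected with as many edges as vertices. -/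
def Unicyclic {V : Type*} [Fintype V] (G : SimpleGraph V) : Prop :=
  G.Connected ∧ G.edgeSet.ncard = Fintype.card V

/-- The graph star (corona with `K₁`) of `G`: each vertex `inl v` gets a pendant
vertex `inr v`. -/
def corona {V : Type*} (G : SimpleGraph V) : SimpleGraph (V ⊕ V) :=
  SimpleGraph.fromRel (fun a b =>
    match a, b with
    | Sum.inl u, Sum.inl v => G.Adj u v
    | Sum.inl u, Sum.inr v => u = v
    | _, _ => False)

/-- `Ugraph n` (`U_n`, `n ≥ 3`): a triangle `0,1,2` with `n - 3` pendant vertices attached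
to vertex `0`. -/
def Ugraph (n : ℕ) : SimpleGraph (Fin n) :=
  SimpleGraph.fromRel (fun i j => i.val = 0 ∨ (i.val = 1 ∧ j.val = 2))

/-- `Dgraph n` (`D_n`, `n ≥ 4`): a path `0,1,...,n-1` plus the chord `{0,2}`, i.e. a
triangle with a path on `n - 3` vertices attached. -/
def Dgraph (n : ℕ) : SimpleGraph (Fin n) :=
  SimpleGraph.fromRel (fun i j => j.val = i.val + 1 ∨ (i.val = 0 ∧ j.val = 2))

/-- `starGraph n` (`S_n = K_{1,n-1}`): vertex `0` adjacent to all other vertices. -/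
def starGraph (n : ℕ) : SimpleGraph (Fin n) :=
  SimpleGraph.fromRel (fun i _ => i.val = 0)

/-- `Mgraph n` (`M_n`, odd `n ≥ 5`): a triangle `0,1,2` with `(n-3)/2` paths of length two
attached at vertex `0`; the middle vertices are the odd indices `3,5,...,n-2` and the leaf
attached to middle vertex `i` is `i + 1`. -/
def Mgraph (n : ℕ) : SimpleGraph (Fin n) :=
  SimpleGraph.fromRel (fun i j =>
    (i.val = 0 ∧ (j.val ≤ 2 ∨ j.val % 2 = 1)) ∨ (i.val = 1 ∧ j.val = 2) ∨
    (i.val % 2 = 1 ∧ 3 ≤ i.val ∧ j.val = i.val + 1))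

/-- `SPgraph g k ℓ` (`G(g,k,ℓ)`, for `g ∈ {3,5}` and `k + ℓ ≥ 1`): a cycle on the vertices
`0,...,g-1`, a copy of `P_k*` on the vertices `g,...,g+2k-1` (path vertices at even offsets,
each followed by its pendant vertex) joined to the cycle vertex `0` by an edge to the
path end `g`, and a copy of `P_ℓ*` on the vertices `g+2k,...,g+2k+2ℓ-1` joined to the cycle
vertex `2` by an edge to the path end `g+2k`. -/
def SPgraph (g k ℓ : ℕ) : SimpleGraph (Fin (g + 2*k + 2*ℓ)) :=
  SimpleGraph.fromRel (fun i j =>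
    (i.val < g ∧ j.val < g ∧ (j.val = i.val + 1 ∨ (i.val = 0 ∧ j.val = g - 1))) ∨
    (i.val = 0 ∧ 0 < k ∧ j.val = g) ∨
    (g ≤ i.val ∧ i.val < g + 2*k ∧ (i.val - g) % 2 = 0 ∧
      (j.val = i.val + 1 ∨ (j.val = i.val + 2 ∧ j.val < g + 2*k))) ∨
    (i.val = 2 ∧ 0 < ℓ ∧ j.val = g + 2*k) ∨
    (g + 2*k ≤ i.val ∧ (i.val - (g + 2*k)) % 2 = 0 ∧
      (j.val = i.val + 1 ∨ j.val = i.val + 2)))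

/-- `Gtree n` (`G_{2n}`, `n ≥ 5`): the tree on `2n` vertices with path `v_1 … v_n` at
indices `0,…,n-1`, `z_1` at index `n`, `y_1, y_2` at `n+1, n+2`, `x_1, x_2` at `n+3, n+4`
(with `v_3 z_1`, `v_3 y_1`, `y_1 y_2`, `v_5 x_1`, `x_1 x_2` edges), and pendant vertices
`w_j` at index `n + j - 1` attached to `v_j` for `6 ≤ j ≤ n`. -/
def Gtree (n : ℕ) : SimpleGraph (Fin (2*n)) :=
  SimpleGraph.fromRel (fun a b =>
    (a.val + 1 = b.val ∧ b.val < n) ∨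
    (a.val = 2 ∧ (b.val = n ∨ b.val = n + 1)) ∨
    (a.val = n + 1 ∧ b.val = n + 2) ∨
    (a.val = 4 ∧ b.val = n + 3) ∨
    (a.val = n + 3 ∧ b.val = n + 4) ∨
    (5 ≤ a.val ∧ a.val < n ∧ b.val = n + a.val))

section IndepFinset

variable {V : Type*} (G : SimpleGraph V)

lemma isIndepFinset_empty : IsIndepFinset G ∅ := by
  simp [IsIndepFinset]

lemma isIndepFinset_insert [DecidableEq V] {v : V} {s : Finset V} :
    IsIndepFinset G (insert v s) ↔ IsIndepFinset G s ∧ ∀ u ∈ s, ¬ G.Adj v u := by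
  simp only [IsIndepFinset, Finset.forall_mem_insert, G.irrefl, not_false_eq_true, true_and]
  grind [G.adj_comm]

end IndepFinset

section IndepPolyOn

open Finset

variable {V : Type*} (G : SimpleGraph V)

open Classical in
/-- The independence polynomial of the subgraph of `G` induced on `S`, used for vertex deletion.
It is a sum over subsets of `S`, not over finsets of the subtype, so that the polynomials of all
induced subgraphs can be compared within one vertex type. -/
noncomputable def indepPolyOn (S : Finset V) : ℝ[X] :=
  ∑ s ∈ S.powerset with IsIndepFinset G s, X ^ #s

lemma indepPoly_eq_indepPolyOn_univ [Fintype V] : indepPoly G = indepPolyOn G univ := by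
  rw [indepPoly, indepPolyOn, sum_filter, powerset_univ]

lemma indepPolyOn_empty : indepPolyOn G ∅ = 1 := by
  simp [indepPolyOn, filter_singleton, isIndepFinset_empty]

lemma indepPolyOn_insert [DecidableEq V] [DecidableRel G.Adj] {v : V} {S : Finset V}
    (hv : v ∉ S) :
    indepPolyOn G (insert v S) = indepPolyOn G S + X * indepPolyOn G {u ∈ S | ¬ G.Adj v u} := by
  classical
  have hnonadj : {s ∈ S.powerset | IsIndepFinset G (insert v s)} =
      {s ∈ powerset {u ∈ S | ¬ G.Adj v u} | IsIndepFinset G s} := by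
    ext s
    simp only [mem_filter, mem_powerset, isIndepFinset_insert, subset_iff]
    grind
  have hcard : ∀ s ∈ S.powerset, #(insert v s) = #s + 1 := fun s hs ↦
    card_insert_of_notMem fun hvs ↦ hv (mem_powerset.1 hs hvs)
  simp only [indepPolyOn, sum_filter, sum_powerset_insert hv]
  congr 1
  rw [← sum_filter, ← sum_filter, mul_sum, ← hnonadj]
  refine sum_congr rfl fun s hs ↦ ?_
  rw [hcard s (mem_filter.1 hs).1, pow_succ']

lemma indepPolyOn_singleton (v : V) : indepPolyOn G {v} = 1 + X := by
  classical
  rw [← insert_empty_eq, indepPolyOn_insert G (notMem_empty v), filter_empty, indepPolyOn_empty,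
    mul_one]

lemma eval_indepPolyOn_pos (S : Finset V) {x : ℝ} (hx : 0 ≤ x) :
    0 < (indepPolyOn G S).eval x := by
  rw [indepPolyOn, eval_finsetSum]
  refine sum_pos' (fun s _ ↦ by simpa using pow_nonneg hx _) ⟨∅, ?_, by simp⟩
  simp [isIndepFinset_empty]

lemma antitone_eval_indepPolyOn {x : ℝ} (hx : x ≤ 0)
    (hnonneg : ∀ S, 0 ≤ (indepPolyOn G S).eval x) :
    Antitone fun S ↦ (indepPolyOn G S).eval x := by
  classical
  refine antitone_iff_forall_insert_le.2 fun S v hv ↦ ?_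
  rw [indepPolyOn_insert G hv, eval_add, eval_mul, eval_X]
  exact add_le_of_nonpos_right (mul_nonpos_of_nonpos_of_nonneg hx (hnonneg _))

end IndepPolyOn

lemma exists_mem_Icc_forall_nonneg_exists_eq_zero {ι : Type*} [Finite ι] {f : ι → ℝ → ℝ}
    {a b : ℝ} (hab : a ≤ b) (hf : ∀ i, ContinuousOn (f i) (Set.Icc a b)) (ha : ∃ i, f i a ≤ 0)
    (hb : ∀ i, 0 ≤ f i b) :
    ∃ x ∈ Set.Icc a b, (∀ i, 0 ≤ f i x) ∧ ∃ i, f i x = 0 := by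
  have := Fintype.ofFinite ι
  obtain ⟨i, hi⟩ := ha
  have huniv : (Finset.univ : Finset ι).Nonempty := ⟨i, Finset.mem_univ i⟩
  obtain ⟨x, hx, hmin⟩ := intermediate_value_Icc hab
    (ContinuousOn.finset_inf'_apply huniv fun i _ ↦ hf i)
    ⟨(Finset.inf'_le _ (Finset.mem_univ i)).trans hi, Finset.le_inf' _ _ fun j _ ↦ hb j⟩
  obtain ⟨j, -, hj⟩ := Finset.exists_mem_eq_inf' huniv (f · x)
  exact ⟨x, hx, fun k ↦ hmin.symm.trans_le (Finset.inf'_le _ (Finset.mem_univ k)),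
    j, hj.symm.trans hmin⟩

section LargestRoot

variable {V : Type*} [Fintype V] (G : SimpleGraph V)

lemma eval_indepPoly_pos {x : ℝ} (hx : 0 ≤ x) : 0 < (indepPoly G).eval x := by
  rw [indepPoly_eq_indepPolyOn_univ]
  exact eval_indepPolyOn_pos G _ hx

lemma neg_of_eval_indepPoly_eq_zero {x : ℝ} (hx : (indepPoly G).eval x = 0) : x < 0 :=
  not_le.1 fun h ↦ (eval_indepPoly_pos G h).ne' hx

lemma bddAbove_roots_indepPoly : BddAbove {x : ℝ | (indepPoly G).eval x = 0} :=
  ⟨0, fun _ hx ↦ (neg_of_eval_indepPoly_eq_zero G hx).le⟩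

variable [Nonempty V]

lemma exists_ge_neg_one_eval_indepPoly_eq_zero : ∃ x ≥ -1, (indepPoly G).eval x = 0 := by
  have hneg_one : ∃ S, (indepPolyOn G S).eval (-1) ≤ 0 :=
    ⟨{Classical.arbitrary V}, by simp [indepPolyOn_singleton]⟩
  obtain ⟨x, hx, hnonneg, S, hS⟩ := exists_mem_Icc_forall_nonneg_exists_eq_zero
    (by norm_num : (-1 : ℝ) ≤ 0) (fun S ↦ (indepPolyOn G S).continuousOn) hneg_one
    fun S ↦ (eval_indepPolyOn_pos G S le_rfl).le
  refine ⟨x, hx.1, ?_⟩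
  rw [indepPoly_eq_indepPolyOn_univ]
  have hle := antitone_eval_indepPolyOn G hx.2 hnonneg (Finset.subset_univ S)
  exact le_antisymm (hle.trans_eq hS) (hnonneg _)

lemma isGreatest_xi : IsGreatest {x : ℝ | (indepPoly G).eval x = 0} (xi G) := by
  obtain ⟨x, -, hx⟩ := exists_ge_neg_one_eval_indepPoly_eq_zero G
  exact (isClosed_eq (indepPoly G).continuous continuous_const).isGreatest_csSup ⟨x, hx⟩
    (bddAbove_roots_indepPoly G)

lemma neg_one_le_xi : -1 ≤ xi G := by
  obtain ⟨x, hx, hroot⟩ := exists_ge_neg_one_eval_indepPoly_eq_zero G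
  exact hx.trans ((isGreatest_xi G).2 hroot)

lemma xi_neg : xi G < 0 :=
  neg_of_eval_indepPoly_eq_zero G (isGreatest_xi G).1

end LargestRoot

section CoronaAdj

variable {V : Type*} (G : SimpleGraph V) {u v : V}

lemma corona_adj_inl_inl : (corona G).Adj (.inl u) (.inl v) ↔ G.Adj u v := by
  simpa [corona, G.adj_comm v u] using G.ne_of_adj

lemma corona_adj_inl_inr : (corona G).Adj (.inl u) (.inr v) ↔ u = v := by
  simp [corona]

lemma corona_adj_inr_inr : ¬ (corona G).Adj (.inr u) (.inr v) := by
  simp [corona]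

lemma isIndepFinset_corona_disjSum {s t : Finset V} :
    IsIndepFinset (corona G) (s.disjSum t) ↔ IsIndepFinset G s ∧ Disjoint s t := by
  simp only [IsIndepFinset, Sum.forall, Finset.inl_mem_disjSum, Finset.inr_mem_disjSum,
    (corona G).adj_comm (.inr _) (.inl _), corona_adj_inl_inl, corona_adj_inl_inr,
    corona_adj_inr_inr, Finset.disjoint_left]
  grind

end CoronaAdj

section CoronaPoly

open Finset

variable {V : Type*} [Fintype V] (G : SimpleGraph V)

open Classical in
lemma indepPoly_corona :
    indepPoly (corona G) = ∑ s with IsIndepFinset G s, X ^ #s * (1 + X) ^ #sᶜ := by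
  have hpendant (s : Finset V) :
      ∑ t with Disjoint s t, (X : ℝ[X]) ^ #t = (1 + X) ^ #sᶜ := by
    have hdisjoint : ({t | Disjoint s t} : Finset (Finset V)) = sᶜ.powerset := by
      ext t
      simp [subset_compl_iff_disjoint_left]
    rw [hdisjoint]
    simpa [add_comm] using sum_pow_mul_eq_add_pow (X : ℝ[X]) 1 sᶜ
  calc indepPoly (corona G)
      = ∑ s : Finset V, ∑ t : Finset V,
          if IsIndepFinset (corona G) (s.disjSum t) then X ^ #(s.disjSum t) else 0 := by
        rw [indepPoly, ← sumEquiv.symm.toEquiv.sum_comp, Fintype.sum_prod_type]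
        rfl
    _ = ∑ s with IsIndepFinset G s, X ^ #s * ∑ t with Disjoint s t, X ^ #t := by
        simp only [isIndepFinset_corona_disjSum, card_disjSum, pow_add, ite_and, sum_filter,
          mul_sum, mul_ite, mul_zero, sum_ite_irrel, sum_const_zero]
    _ = _ := by simp only [hpendant]

lemma eval_indepPoly_corona {x : ℝ} (hx : 1 + x ≠ 0) :
    (indepPoly (corona G)).eval x =
      (1 + x) ^ Fintype.card V * (indepPoly G).eval (x / (1 + x)) := by
  classical
  rw [indepPoly_corona, indepPoly, ← sum_filter, eval_finsetSum, eval_finsetSum, mul_sum]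
  refine sum_congr rfl fun s _ ↦ ?_
  simp only [eval_mul, eval_pow, eval_add, eval_one, eval_X, div_pow]
  rw [← card_add_card_compl s, pow_add]
  field_simp

lemma eval_indepPoly_corona_eq_zero_iff {x : ℝ} (hx : 1 + x ≠ 0) :
    (indepPoly (corona G)).eval x = 0 ↔ (indepPoly G).eval (x / (1 + x)) = 0 := by
  rw [eval_indepPoly_corona G hx, mul_eq_zero_iff_left (pow_ne_zero _ hx)]

end CoronaPoly

section Moebius

variable {K : Type*} [Field K] [LinearOrder K] [IsStrictOrderedRing K] {x y : K}

lemma neg_one_lt_div_one_sub (hy : y < 1) : -1 < y / (1 - y) := by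
  rw [lt_div_iff₀ (sub_pos.2 hy)]
  linarith

lemma div_one_sub_div_one_add (hy : y < 1) : y / (1 - y) / (1 + y / (1 - y)) = y := by
  have := (sub_pos.2 hy).ne'
  field_simp
  simp

lemma div_one_add_le_iff_le_div_one_sub (hx : -1 < x) (hy : y < 1) :
    x / (1 + x) ≤ y ↔ x ≤ y / (1 - y) := by
  rw [div_le_iff₀ (by linarith), le_div_iff₀ (by linarith)]
  constructor <;> intro h <;> linarith

end Moebius

lemma isGreatest_roots_indepPoly_corona {V : Type*} [Fintype V] {G : SimpleGraph V} {r : ℝ}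
    (hr : IsGreatest {x : ℝ | (indepPoly G).eval x = 0} r) (hr_lt : r < 1) :
    IsGreatest {x : ℝ | (indepPoly (corona G)).eval x = 0} (r / (1 - r)) := by
  have hgt : -1 < r / (1 - r) := neg_one_lt_div_one_sub hr_lt
  constructor
  · refine (eval_indepPoly_corona_eq_zero_iff G (by linarith)).2 ?_
    rw [div_one_sub_div_one_add hr_lt]
    exact hr.1
  · intro x hx
    obtain hx_le | hx_gt := le_or_gt x (-1)
    · exact hx_le.trans hgt.le
    · refine (div_one_add_le_iff_le_div_one_sub hx_gt hr_lt).1 (hr.2 ?_)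
      exact (eval_indepPoly_corona_eq_zero_iff G (by linarith)).1 hx

/-- For every graph `G` with at least one vertex,
`ξ(G*) = ξ(G)/(1 − ξ(G))`; in particular `ξ(G*) ≥ −1/2`. -/
theorem stmt5 {V : Type*} [Fintype V] (G : SimpleGraph V) (h : 1 ≤ Fintype.card V) :
    xi (corona G) = xi G / (1 - xi G) ∧ (-(1/2) : ℝ) ≤ xi (corona G) := by
  have : Nonempty V := Fintype.card_pos_iff.1 h
  have hneg : xi G < 0 := xi_neg G
  have hxi : xi (corona G) = xi G / (1 - xi G) :=
    (isGreatest_roots_indepPoly_corona (isGreatest_xi G) (by linarith)).csSup_eq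
  refine ⟨hxi, ?_⟩
  rw [hxi, le_div_iff₀ (by linarith)]
  linarith [neg_one_le_xi G]
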